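/- Let K be an infinite field and I a homogeneous ideal of A = K[X_1,...,X_n]. Then there exists a nonempty Zariski open subset U ⊆ GL_n(K) such that the Gröbner fan of gI equals the Gröbner fan of hI for all g, h ∈ U; that is, for all weights ω, ω', in_ω(gI) = in_{ω'}(gI) if and only if in_ω(hI) = in_{ω'}(hI). -/

import Mathlib

/-!
In each degree `d`, the set of pairs of weights `ω, ω'` with `in_ω(J_d) = in_{ω'}(J_d)` depends only
on the matroid of the subspace `J_d` of `K^N`, where `N` is the number of monomials of degree `d`
(`inW_eq_inW_iff`). Indeed the initial subspace can be read off from the reduced basis of `J_d`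
attached to a matroid basis of maximal weight, and the supports of reduced basis vectors are
determined by the matroid. For `J = gI` a set of monomials is a basis of this matroid if and only if
a minor with polynomial entries in `g` does not vanish, so the matroid of `(gI)_d` is constant on a
nonempty open set (`exists_generic_matroid`).

It remains to see that finitely many degrees suffice, uniformly in `g` and in the weights. All ideals
`in_ω(gI)` are homogeneous with the same Hilbert function as `I`. A further degeneration to a
monomial ideal, by a weight `τ` with coordinates linearly independent over `ℚ`, preserves the Hilbert
function, and monomial ideals with a given Hilbert function are generated in bounded degree
(`exists_degree_bound`, from Dickson's lemma and compactness). Hence equality of initial ideals can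
be tested in degrees up to a uniform bound `D` (`exists_bound`, `iniIdealW_eq_iff`), and the
intersection of the open sets for `d ≤ D` has the required property.
-/

open MvPolynomial

/-- The weight of an exponent vector with respect to a weight vector `ω ∈ ℝⁿ`. -/
noncomputable def wt {n : ℕ} (ω : Fin n → ℝ) (m : Fin n →₀ ℕ) : ℝ := ∑ i, ω i * (m i)

open Classical in
/-- The initial form of a polynomial with respect to a weight `ω`: the sum of its
terms of maximal `ω`-weight. -/
noncomputable def iniW {K : Type*} [Field K] {n : ℕ} (ω : Fin n → ℝ)
    (f : MvPolynomial (Fin n) K) : MvPolynomial (Fin n) K :=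
  ∑ m ∈ f.support.filter (fun m => ∀ m' ∈ f.support, wt ω m' ≤ wt ω m),
    monomial m (coeff m f)

/-- The initial ideal of `I` with respect to a weight `ω`. -/
noncomputable def iniIdealW {K : Type*} [Field K] {n : ℕ} (ω : Fin n → ℝ)
    (I : Ideal (MvPolynomial (Fin n) K)) : Ideal (MvPolynomial (Fin n) K) :=
  Ideal.span {p | ∃ f ∈ I, p = iniW ω f}

/-- The change of coordinates of `K[X]` associated to a matrix `g`. -/
noncomputable def cc {K : Type*} [Field K] {n : ℕ} (g : Matrix (Fin n) (Fin n) K) :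
    MvPolynomial (Fin n) K →ₐ[K] MvPolynomial (Fin n) K :=
  aeval (fun i => ∑ j, C (g i j) * X j)

/-- Evaluation of a polynomial in the variables `y_{ij}` at a matrix `g`. -/
noncomputable def evalMat {K : Type*} [Field K] {n : ℕ}
    (p : MvPolynomial (Fin n × Fin n) K) (g : Matrix (Fin n) (Fin n) K) : K :=
  eval (fun ij => g ij.1 ij.2) p

/-- A homogeneous ideal. -/
def IsHomogIdeal {σ R : Type*} [CommSemiring R] (I : Ideal (MvPolynomial σ R)) : Prop :=
  ∀ f ∈ I, ∀ d : ℕ, MvPolynomial.homogeneousComponent d f ∈ I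

/-! ### Initial subspaces and matroid bases -/

section LinearAlgebra

variable {ι K : Type*} [Field K]

/-- The part of the vector `v` on the coordinates of weight exactly `a`. -/
noncomputable def lvl (w : ι → ℝ) (a : ℝ) (v : ι → K) : ι → K :=
  {i | w i = a}.indicator v

open Classical in
theorem lvl_apply (w : ι → ℝ) (a : ℝ) (v : ι → K) (i : ι) :
    lvl w a v i = if w i = a then v i else 0 := by
  simp [lvl, Set.indicator_apply]

/-- The initial subspace of `V` for the weights `w`, spanned by the initial forms of the vectors
in `V`. The level `a` is only required to bound the weights occurring in `v`: if it is not
attained, then `lvl w a v = 0`, which does not change the span. -/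
def inW (w : ι → ℝ) (V : Submodule K (ι → K)) : Submodule K (ι → K) :=
  Submodule.span K {u | ∃ v ∈ V, ∃ a, (∀ i, v i ≠ 0 → w i ≤ a) ∧ u = lvl w a v}

theorem inW_mono (w : ι → ℝ) {V V' : Submodule K (ι → K)} (h : V ≤ V') : inW w V ≤ inW w V' :=
  Submodule.span_mono fun _ ⟨v, hv, r⟩ => ⟨v, h hv, r⟩

/-- `B` is a basis of the matroid of `V`: restriction of vectors to the coordinates in `B` is an
isomorphism from `V` onto `K^B`. Injectivity and equality of dimensions are required. -/
def IsMBasis (V : Submodule K (ι → K)) (B : Finset ι) : Prop :=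
  B.card = Module.finrank K V ∧ ∀ v ∈ V, (∀ b ∈ B, v b = 0) → v = 0

/-- Restriction of the vectors in `V` to the coordinates in `B`. -/
def resB (V : Submodule K (ι → K)) (B : Finset ι) : V →ₗ[K] (B → K) :=
  (LinearMap.funLeft K K (fun b : B => (b : ι))).comp V.subtype

@[simp] theorem resB_apply (V : Submodule K (ι → K)) (B : Finset ι) (v : V) (b : B) :
    resB V B v b = (v : ι → K) b := rfl

variable {V : Submodule K (ι → K)} {B : Finset ι}

/-- The vectors `f b`, `b ∈ B`, lie in `V` and restrict to the standard basis of `K^B`. Values of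
`f` outside `B` are irrelevant. When `B` is a matroid basis this is the reduced basis of `V`. -/
structure IsDual (V : Submodule K (ι → K)) (B : Finset ι) (f : ι → ι → K) : Prop where
  mem : ∀ b ∈ B, f b ∈ V
  diag : ∀ b ∈ B, f b b = 1
  off : ∀ b ∈ B, ∀ c ∈ B, c ≠ b → f b c = 0

theorem resB_injective (h : ∀ v ∈ V, (∀ b ∈ B, v b = 0) → v = 0) :
    Function.Injective (resB V B) := by
  rw [← LinearMap.ker_eq_bot, LinearMap.ker_eq_bot']
  intro v hv
  exact Subtype.ext (h v v.2 fun b hb => congrFun hv ⟨b, hb⟩)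

theorem IsDual.expand {f : ι → ι → K} (hf : IsDual V B f)
    (h : ∀ v ∈ V, (∀ b ∈ B, v b = 0) → v = 0) {v : ι → K} (hv : v ∈ V) :
    v = ∑ b ∈ B, v b • f b := by
  rw [← sub_eq_zero]
  refine h _ (V.sub_mem hv (V.sum_mem fun b hb => V.smul_mem _ (hf.mem b hb))) fun c hc => ?_
  rw [Pi.sub_apply, Finset.sum_apply, Finset.sum_eq_single_of_mem c hc]
  · simp [hf.diag c hc]
  · intro b hb hbc
    simp [hf.off b hb c hc hbc.symm]

theorem IsDual.linearIndependent {f : ι → ι → K} (hf : IsDual V B f) :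
    LinearIndependent K (fun b : B => f b) := by
  rw [Fintype.linearIndependent_iff]
  intro g hg c
  have := congrFun hg c
  rw [Finset.sum_apply, Finset.sum_eq_single_of_mem c (Finset.mem_univ _)] at this
  · simpa [hf.diag c c.2] using this
  · intro b _ hbc
    simp [hf.off b b.2 c c.2 (fun e => hbc (Subtype.ext e.symm))]

theorem IsMBasis.exists_dual [Finite ι] (hB : IsMBasis V B) : ∃ f, IsDual V B f := by
  classical
  have hinj := resB_injective hB.2
  have hsurj : Function.Surjective (resB V B) := by
    rw [← LinearMap.injective_iff_surjective_of_finrank_eq_finrank]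
    · exact hinj
    · simp [hB.1]
  choose g hg using hsurj
  refine ⟨fun b => if h : b ∈ B then (g (Pi.single ⟨b, h⟩ 1) : ι → K) else 0, ?_, ?_, ?_⟩
  · intro b hb
    simp [hb]
  · intro b hb
    have := congrFun (hg (Pi.single ⟨b, hb⟩ 1)) ⟨b, hb⟩
    simpa [hb] using this
  · intro b hb c hc hcb
    have := congrFun (hg (Pi.single ⟨b, hb⟩ 1)) ⟨c, hc⟩
    simpa [hb, Pi.single_apply, hcb] using this

theorem IsDual.isMBasis [Finite ι] {f : ι → ι → K} (hf : IsDual V B f)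
    (h : ∀ v ∈ V, (∀ b ∈ B, v b = 0) → v = 0) : IsMBasis V B := by
  refine ⟨le_antisymm ?_ ?_, h⟩
  · have hli : LinearIndependent K (fun b : B => (⟨f b, hf.mem b b.2⟩ : V)) := by
      have := hf.linearIndependent
      exact LinearIndependent.of_comp V.subtype this
    simpa using hli.fintype_card_le_finrank
  · simpa using LinearMap.finrank_le_finrank_of_injective (resB_injective h)

/-- A minimal set of coordinates which separates the vectors of `V` is a matroid basis. -/
theorem exists_isMBasis [Finite ι] (V : Submodule K (ι → K)) : ∃ B, IsMBasis V B := by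
  classical
  have := Fintype.ofFinite ι
  let sep : Finset ι → Prop := fun B => ∀ v ∈ V, (∀ b ∈ B, v b = 0) → v = 0
  obtain ⟨B, hB, hmin⟩ := Finset.exists_min_image (Finset.univ.filter sep) Finset.card
    ⟨Finset.univ, by simp only [Finset.mem_filter, Finset.mem_univ, true_and, sep]
                     exact fun v _ h => funext fun i => h i trivial⟩
  replace hB : sep B := (Finset.mem_filter.1 hB).2
  have key : ∀ b ∈ B, ∃ v ∈ V, v b = 1 ∧ ∀ c ∈ B, c ≠ b → v c = 0 := by
    intro b hb
    have hn : ¬ sep (B.erase b) := fun hs => by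
      have := hmin _ (Finset.mem_filter.2 ⟨Finset.mem_univ _, hs⟩)
      exact absurd (Finset.card_erase_lt_of_mem hb) (not_lt.2 this)
    simp only [sep] at hn
    push Not at hn
    obtain ⟨v, hv, h0, hne⟩ := hn
    have hvb : v b ≠ 0 := fun h => hne <| hB v hv fun c hc => by
      by_cases hcb : c = b
      · rwa [hcb]
      · exact h0 c (Finset.mem_erase.2 ⟨hcb, hc⟩)
    refine ⟨(v b)⁻¹ • v, V.smul_mem _ hv, by simp [hvb], fun c hc hcb => ?_⟩
    simp [h0 c (Finset.mem_erase.2 ⟨hcb, hc⟩)]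
  choose! f h1 h2 h3 using key
  exact ⟨B, IsDual.isMBasis ⟨h1, h2, h3⟩ hB⟩

open Classical in
/-- The support of a reduced basis vector is determined by the matroid: `B - b + s` is a basis
exactly when `f b` does not vanish at `s`. -/
theorem IsMBasis.exchange_iff (hB : IsMBasis V B) {f : ι → ι → K} (hf : IsDual V B f)
    {b s : ι} (hb : b ∈ B) (hs : s ∉ B) :
    IsMBasis V (insert s (B.erase b)) ↔ f b s ≠ 0 := by
  constructor
  · intro h h0
    have : f b = 0 := h.2 _ (hf.mem b hb) fun c hc => by
      rcases Finset.mem_insert.1 hc with rfl | hc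
      · exact h0
      · exact hf.off b hb c (Finset.mem_of_mem_erase hc) (Finset.ne_of_mem_erase hc)
    simpa [this] using hf.diag b hb
  · intro h
    refine ⟨?_, fun v hv h0 => ?_⟩
    · rw [Finset.card_insert_of_notMem (fun h => hs (Finset.mem_of_mem_erase h)),
        Finset.card_erase_add_one hb, hB.1]
    · have hv' : v = v b • f b := by
        conv_lhs => rw [hf.expand hB.2 hv]
        refine Finset.sum_eq_single_of_mem b hb fun c hc hcb => ?_
        rw [h0 c (Finset.mem_insert_of_mem (Finset.mem_erase.2 ⟨hcb, hc⟩)), zero_smul]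
      have h1 := h0 s (Finset.mem_insert_self _ _)
      rw [hv'] at h1
      have : v b = 0 := by simpa [h] using h1
      rw [hv', this, zero_smul]

/-- Every reduced basis vector of a matroid basis of maximal total weight has its leading term at
its own index: otherwise an exchange would increase the total weight. -/
theorem exists_optimal [Finite ι] (V : Submodule K (ι → K)) (w : ι → ℝ) :
    ∃ B, IsMBasis V B ∧ ∀ f, IsDual V B f → ∀ b ∈ B, ∀ s, f b s ≠ 0 → w s ≤ w b := by
  classical
  have := Fintype.ofFinite ι
  obtain ⟨B₀, hB₀⟩ := exists_isMBasis V
  obtain ⟨B, hB, hmax⟩ := Finset.exists_max_image (Finset.univ.filter (IsMBasis V))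
    (fun B => ∑ b ∈ B, w b) ⟨B₀, by simpa using hB₀⟩
  replace hB : IsMBasis V B := (Finset.mem_filter.1 hB).2
  refine ⟨B, hB, fun f hf b hb s hs => ?_⟩
  by_cases hsB : s ∈ B
  · by_cases hsb : s = b
    · rw [hsb]
    · exact absurd (hf.off b hb s hsB hsb) hs
  · have := hmax _ (Finset.mem_filter.2 ⟨Finset.mem_univ _, (hB.exchange_iff hf hb hsB).2 hs⟩)
    rw [Finset.sum_insert (fun h => hsB (Finset.mem_of_mem_erase h)),
      ← Finset.add_sum_erase _ _ hb] at this
    linarith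

/-- If each reduced basis vector `f b` has its leading term at `b`, then taking initial forms of
these vectors produces all of the initial subspace: no cancellation of leading terms can occur. -/
theorem inW_eq_span (hB : IsMBasis V B) {f : ι → ι → K} (hf : IsDual V B f) {w : ι → ℝ}
    (hw : ∀ b ∈ B, ∀ s, f b s ≠ 0 → w s ≤ w b) :
    inW w V = Submodule.span K (Set.range fun b : B => lvl w (w b) (f b)) := by
  classical
  apply le_antisymm
  · refine Submodule.span_le.2 ?_
    rintro _ ⟨v, hv, a, ha, rfl⟩
    have : lvl w a v = ∑ b ∈ B, (if w b = a then v b else 0) • lvl w (w b) (f b) := by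
      funext i
      conv_lhs => rw [lvl_apply, hf.expand hB.2 hv]
      rw [Finset.sum_apply, Finset.sum_apply]
      split_ifs with hi
      · refine Finset.sum_congr rfl fun b hb => ?_
        simp only [Pi.smul_apply, smul_eq_mul, lvl_apply]
        rcases lt_trichotomy (w b) a with h | h | h
        · have : f b i = 0 := by
            by_contra h'
            have := hw b hb i h'
            linarith
          simp [this]
        · simp [h, hi]
        · have : v b = 0 := by
            by_contra h'
            have := ha b h'
            linarith
          simp [this]
      · refine (Finset.sum_eq_zero fun b hb => ?_).symm
        simp only [Pi.smul_apply, smul_eq_mul, lvl_apply]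
        split_ifs with h1 h2
        · exact absurd (h2.trans h1) hi
        all_goals simp
    rw [this]
    exact Submodule.sum_mem _ fun b hb => Submodule.smul_mem _ _
      (Submodule.subset_span ⟨⟨b, hb⟩, rfl⟩)
  · refine Submodule.span_le.2 ?_
    rintro _ ⟨b, rfl⟩
    exact Submodule.subset_span ⟨f b, hf.mem b b.2, w b, hw b b.2, rfl⟩

theorem isDual_inW {f : ι → ι → K} (hf : IsDual V B f) {w : ι → ℝ}
    (hw : ∀ b ∈ B, ∀ s, f b s ≠ 0 → w s ≤ w b) :
    IsDual (inW w V) B (fun b => lvl w (w b) (f b)) := by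
  classical
  refine ⟨fun b hb => Submodule.subset_span ⟨f b, hf.mem b hb, w b, hw b hb, rfl⟩, ?_, ?_⟩
  · intro b hb
    simp [lvl_apply, hf.diag b hb]
  · intro b hb c hc hcb
    simp [lvl_apply, hf.off b hb c hc hcb]

theorem isMBasis_inW [Finite ι] (hB : IsMBasis V B) {f : ι → ι → K} (hf : IsDual V B f) {w : ι → ℝ}
    (hw : ∀ b ∈ B, ∀ s, f b s ≠ 0 → w s ≤ w b) : IsMBasis (inW w V) B := by
  have hd := isDual_inW hf hw
  have := finrank_span_eq_card hd.linearIndependent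
  rw [← inW_eq_span hB hf hw] at this
  have hc : B.card = Module.finrank K (inW w V) := by simpa using this.symm
  refine ⟨hc, fun v hv h0 => ?_⟩
  rw [inW_eq_span hB hf hw, Submodule.mem_span_range_iff_exists_fun] at hv
  obtain ⟨c, rfl⟩ := hv
  refine Finset.sum_eq_zero fun b _ => ?_
  have := h0 b b.2
  rw [Finset.sum_apply, Finset.sum_eq_single_of_mem b (Finset.mem_univ _)] at this
  · have h1 : c b = 0 := by simpa [hd.diag b b.2] using this
    rw [h1, zero_smul]
  · intro b' _ h
    rw [Pi.smul_apply, hd.off b' b'.2 b b.2 (fun e => h (Subtype.ext e.symm)), smul_zero]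

theorem finrank_inW [Finite ι] (V : Submodule K (ι → K)) (w : ι → ℝ) :
    Module.finrank K (inW w V) = Module.finrank K V := by
  obtain ⟨B, hB, hopt⟩ := exists_optimal V w
  obtain ⟨f, hf⟩ := hB.exists_dual
  rw [← hB.1, (isMBasis_inW hB hf (hopt f hf)).1]

theorem exists_lvl_ne_zero [Finite ι] (w : ι → ℝ) {v : ι → K} (hv : v ≠ 0) :
    ∃ a, (∀ i, v i ≠ 0 → w i ≤ a) ∧ lvl w a v ≠ 0 := by
  classical
  have := Fintype.ofFinite ι
  obtain ⟨i, hi⟩ := Function.ne_iff.1 hv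
  obtain ⟨j, hj, hmax⟩ := Finset.exists_max_image (Finset.univ.filter fun i => v i ≠ 0) w
    ⟨i, by simpa using hi⟩
  refine ⟨w j, fun i hi => hmax i (by simpa using hi), fun h => ?_⟩
  have := congrFun h j
  simp only [Finset.mem_filter, Finset.mem_univ, true_and] at hj
  simp [lvl_apply, hj] at this

open Classical in
/-- Whether two weights give the same initial subspace of `V` depends only on the matroid of `V`:
they do if and only if some basis `B` is optimal for both, and for each of its elements `b` the
exchanges `b → s` which preserve the weight are the same for both. -/
theorem inW_eq_inW_iff [Finite ι] (V : Submodule K (ι → K)) (w w' : ι → ℝ) :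
    inW w V = inW w' V ↔ ∃ B, IsMBasis V B ∧ ∀ b ∈ B, ∀ s ∉ B,
      IsMBasis V (insert s (B.erase b)) →
        w s ≤ w b ∧ w' s ≤ w' b ∧ (w s = w b ↔ w' s = w' b) := by
  constructor
  · intro h
    obtain ⟨B, hB, hopt⟩ := exists_optimal V w
    obtain ⟨f, hf⟩ := hB.exists_dual
    have hw := hopt f hf
    have hW := isMBasis_inW hB hf hw
    -- `B` is a basis for the common initial subspace, so the `w'`-initial form of `f b` is nonzero
    -- somewhere on `B`, which can only be at `b`.
    have hw' : ∀ b ∈ B, ∀ s, f b s ≠ 0 → w' s ≤ w' b := by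
      intro b hb s hs
      have hne : f b ≠ 0 := fun h0 => hs (by simp [h0])
      obtain ⟨a, ha, hne'⟩ := exists_lvl_ne_zero w' hne
      have hmem : lvl w' a (f b) ∈ inW w V := by
        rw [h]
        exact Submodule.subset_span ⟨_, hf.mem b hb, a, ha, rfl⟩
      have : a = w' b := by
        by_contra hab
        refine hne' (hW.2 _ hmem fun c hc => ?_)
        rw [lvl_apply]
        split_ifs with hca
        · exact hf.off b hb c hc (fun e => hab (by rw [← hca, e]))
        · rfl
      exact this ▸ ha s hs
    refine ⟨B, hB, fun b hb s hs hex => ?_⟩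
    have hbs := (hB.exchange_iff hf hb hs).1 hex
    refine ⟨hw b hb s hbs, hw' b hb s hbs, ?_⟩
    -- Both initial forms lie in the common initial subspace and agree on its basis `B`.
    have heq : lvl w (w b) (f b) = lvl w' (w' b) (f b) := by
      rw [← sub_eq_zero]
      have h1 := isDual_inW hf hw
      have h2 := isDual_inW hf hw'
      rw [← h] at h2
      refine hW.2 _ (Submodule.sub_mem _ (h1.mem b hb) (h2.mem b hb)) fun c hc => ?_
      by_cases hcb : c = b
      · subst hcb
        have e1 := h1.diag c hc
        have e2 := h2.diag c hc
        rw [Pi.sub_apply, e1, e2, sub_self]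
      · have e1 := h1.off b hb c hc hcb
        have e2 := h2.off b hb c hc hcb
        rw [Pi.sub_apply, e1, e2, sub_self]
    have := congrFun heq s
    simp only [lvl_apply] at this
    by_cases h1 : w s = w b <;> by_cases h2 : w' s = w' b <;> simp_all
  · rintro ⟨B, hB, hE⟩
    obtain ⟨f, hf⟩ := hB.exists_dual
    have hE' : ∀ b ∈ B, ∀ s, f b s ≠ 0 →
        w s ≤ w b ∧ w' s ≤ w' b ∧ (w s = w b ↔ w' s = w' b) := by
      intro b hb s hs
      by_cases hsB : s ∈ B
      · by_cases hsb : s = b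
        · simp [hsb]
        · exact absurd (hf.off b hb s hsB hsb) hs
      · exact hE b hb s hsB ((hB.exchange_iff hf hb hsB).2 hs)
    rw [inW_eq_span hB hf (fun b hb s hs => (hE' b hb s hs).1),
      inW_eq_span hB hf (fun b hb s hs => (hE' b hb s hs).2.1)]
    congr 2
    funext b s
    simp only [lvl_apply]
    by_cases hs : f b s = 0
    · simp [hs]
    · simp [(hE' b b.2 s hs).2.2]

/-- For pairwise distinct weights the initial subspace is a coordinate subspace, of the same
dimension as `V`. -/
theorem finrank_eq_ncard_of_injective [Finite ι] (V : Submodule K (ι → K)) {w : ι → ℝ}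
    (hw : Function.Injective w) [DecidableEq ι] :
    Module.finrank K V = {i : ι | (Pi.single i 1 : ι → K) ∈ inW w V}.ncard := by
  obtain ⟨B, hB, hopt⟩ := exists_optimal V w
  obtain ⟨f, hf⟩ := hB.exists_dual
  have hW := isMBasis_inW hB hf (hopt f hf)
  have hd := isDual_inW hf (hopt f hf)
  rw [← hB.1, ← Set.ncard_coe_finset]
  congr 1
  ext i
  simp only [Finset.mem_coe, Set.mem_ofPred_eq]
  constructor
  · intro hi
    have : lvl w (w i) (f i) = Pi.single i 1 := by
      funext j
      rw [lvl_apply, Pi.single_apply]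
      by_cases hj : j = i
      · simp [hj, hf.diag i hi]
      · simp [hj, hw.eq_iff]
    rw [← this]
    exact hd.mem i hi
  · intro hi
    by_contra hiB
    have := hW.2 _ hi fun b hb => by
      rw [Pi.single_apply, if_neg]
      rintro rfl
      exact hiB hb
    simpa using congrFun this i

end LinearAlgebra

/-! ### A degree bound for monomial ideals with a given Hilbert function -/

section Combinatorics

open Filter

/-- Monomial ideals (given by their sets of exponents) with a common Hilbert function `H` are
generated in bounded degree. By compactness, a sequence of ideals violating this has a limit `L`
along an ultrafilter, which again has Hilbert function `H`. By Dickson's lemma `L` is generated in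
some degree `D`. An ideal of the sequence that agrees with `L` up to degree `D` then contains `L`,
hence equals `L`, and so is generated in degree `D`. -/
theorem exists_degree_bound {n : ℕ} (H : ℕ → ℕ) :
    ∃ D : ℕ, ∀ B : Set (Fin n →₀ ℕ), IsUpperSet B →
      (∀ d, (B ∩ {m | m.degree = d}).ncard = H d) →
      ∀ b ∈ B, ∃ c ∈ B, c ≤ b ∧ c.degree ≤ D := by
  by_contra! hcon
  choose B hup hH b hb hbad using hcon
  let U : Ultrafilter ℕ := hyperfilter ℕ
  let L : Set (Fin n →₀ ℕ) := {m | ∀ᶠ k in U, m ∈ B k}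
  have hfin : ∀ T : Set (Fin n →₀ ℕ), T.Finite → ∀ᶠ k in U, B k ∩ T = L ∩ T := by
    intro T hT
    have : ∀ᶠ k in U, ∀ m ∈ T, (m ∈ B k ↔ m ∈ L) := by
      rw [(eventually_all_finite hT)]
      intro m _
      by_cases hm : m ∈ L
      · have hm' : ∀ᶠ k in U, m ∈ B k := hm
        filter_upwards [hm'] with k hk
        exact iff_of_true hk hm
      · have hm' : ∀ᶠ k in U, ¬ m ∈ B k := Ultrafilter.eventually_not.2 hm
        filter_upwards [hm'] with k hk
        exact iff_of_false hk hm
    filter_upwards [this] with k hk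
    ext m
    constructor
    · rintro ⟨h1, h2⟩
      exact ⟨(hk m h2).1 h1, h2⟩
    · rintro ⟨h1, h2⟩
      exact ⟨(hk m h2).2 h1, h2⟩
  have hdeg : ∀ d, {m : Fin n →₀ ℕ | m.degree = d}.Finite := fun d =>
    (Finsupp.finite_of_degree_le d).subset fun m hm => le_of_eq hm
  have hLH : ∀ d, (L ∩ {m | m.degree = d}).ncard = H d := by
    intro d
    obtain ⟨k, hk⟩ := (hfin _ (hdeg d)).exists
    rw [← hk, hH]
  -- Dickson's lemma.
  have hmin : {m | Minimal (· ∈ L) m}.Finite :=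
    WellQuasiOrderedLE.finite_of_isAntichain (setOfPred_minimal_antichain _)
  obtain ⟨D, hD⟩ := (hmin.image Finsupp.degree).bddAbove
  have hgen : ∀ m ∈ L, ∃ c ∈ L, c ≤ m ∧ c.degree ≤ D := by
    intro m hm
    obtain ⟨c, hc, hcm⟩ := exists_minimal_le_of_wellFoundedLT (· ∈ L) m hm
    exact ⟨c, hcm.1, hc, hD ⟨c, hcm, rfl⟩⟩
  have hge : ∀ᶠ k in U, D ≤ k := by
    have : (U : Filter ℕ) ≤ atTop := by
      rw [← Nat.cofinite_eq_atTop]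
      exact hyperfilter_le_cofinite
    exact this (eventually_ge_atTop D)
  obtain ⟨k, hk, hDk⟩ := ((hfin _ (Finsupp.finite_of_degree_le D)).and hge).exists
  have hsub : L ⊆ B k := by
    intro m hm
    obtain ⟨c, hc, hcm, hcD⟩ := hgen m hm
    have : c ∈ B k ∩ {m | m.degree ≤ D} := hk ▸ ⟨hc, hcD⟩
    exact hup k hcm this.1
  have hbL : b k ∈ L := by
    have := Set.eq_of_subset_of_ncard_le
      (Set.inter_subset_inter_left {m | m.degree = (b k).degree} hsub)
      (by rw [hLH, hH]) ((hdeg _).inter_of_right _)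
    have h2 : b k ∈ B k ∩ {m | m.degree = (b k).degree} := ⟨hb k, rfl⟩
    rw [← this] at h2
    exact h2.1
  obtain ⟨c, hc, hcm, hcD⟩ := hgen _ hbL
  exact absurd (hbad k c (hsub hc) hcm) (by omega)

/-- Weights that are linearly independent over `ℚ` separate all monomials. -/
theorem exists_injective_wt (n : ℕ) : ∃ τ : Fin n → ℝ, Function.Injective (wt τ) := by
  obtain ⟨τ, hτ⟩ := exists_linearIndependent_of_le_rank (R := ℚ) (M := ℝ) (n := n)
    (by rw [Real.rank_rat_real]; exact (Cardinal.natCast_lt_aleph0.trans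
      Cardinal.aleph0_lt_continuum).le)
  refine ⟨τ, fun m m' h => ?_⟩
  rw [Fintype.linearIndependent_iff] at hτ
  have := hτ (fun i => (m i : ℚ) - m' i) (by
    simp only [wt] at h
    rw [← sub_eq_zero, ← Finset.sum_sub_distrib] at h
    rw [← h]
    refine Finset.sum_congr rfl fun i _ => ?_
    rw [Rat.smul_def]
    push_cast
    ring)
  ext i
  have hi := this i
  rw [sub_eq_zero] at hi
  exact_mod_cast hi

end Combinatorics

/-! ### Graded pieces of initial ideals -/

section Graded

variable {K : Type*} [Field K] {n : ℕ}

/-- The exponent vectors of degree `d` in `n` variables. -/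
abbrev Mon (n d : ℕ) : Type := {m : Fin n →₀ ℕ // m.degree = d}

instance (n d : ℕ) : Finite (Mon n d) :=
  ((Finsupp.finite_of_degree_le (σ := Fin n) d).subset fun _ hm => le_of_eq hm).to_subtype

noncomputable instance (n d : ℕ) : Fintype (Mon n d) := Fintype.ofFinite _

/-- The vector of coefficients of a polynomial in degree `d`. -/
def cf (K : Type*) [Field K] (n d : ℕ) : MvPolynomial (Fin n) K →ₗ[K] (Mon n d → K) where
  toFun f i := coeff i.1 f
  map_add' f g := by ext; simp
  map_smul' c f := by ext; simp

@[simp] theorem cf_apply (d : ℕ) (f : MvPolynomial (Fin n) K) (i : Mon n d) :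
    cf K n d f i = coeff i.1 f := rfl

/-- The form of degree `d` with a given vector of coefficients. -/
noncomputable def ofCf (K : Type*) [Field K] (n d : ℕ) :
    (Mon n d → K) →ₗ[K] MvPolynomial (Fin n) K :=
  ∑ i : Mon n d, (monomial i.1).comp (LinearMap.proj i)

theorem ofCf_apply (d : ℕ) (v : Mon n d → K) : ofCf K n d v = ∑ i, monomial i.1 (v i) := by
  simp [ofCf]

theorem coeff_ofCf (d : ℕ) (v : Mon n d → K) (m : Fin n →₀ ℕ) :
    coeff m (ofCf K n d v) = if h : m.degree = d then v ⟨m, h⟩ else 0 := by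
  classical
  rw [ofCf_apply, coeff_sum]
  simp only [coeff_monomial]
  split_ifs with h
  · rw [Finset.sum_eq_single_of_mem ⟨m, h⟩ (Finset.mem_univ _)]
    · simp
    · intro b _ hb
      rw [if_neg fun e => hb (Subtype.ext e)]
  · refine Finset.sum_eq_zero fun b _ => ?_
    rw [if_neg]
    rintro rfl
    exact h b.2

@[simp] theorem cf_ofCf (d : ℕ) (v : Mon n d → K) : cf K n d (ofCf K n d v) = v := by
  ext i
  simp [coeff_ofCf, i.2]

theorem ofCf_cf (d : ℕ) (f : MvPolynomial (Fin n) K) :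
    ofCf K n d (cf K n d f) = homogeneousComponent d f := by
  ext m
  rw [coeff_ofCf, coeff_homogeneousComponent]
  split_ifs <;> simp

/-- The degree `d` piece of `J`, as a space of coefficient vectors. -/
noncomputable def part (J : Ideal (MvPolynomial (Fin n) K)) (d : ℕ) : Submodule K (Mon n d → K) :=
  (J.restrictScalars K).comap (ofCf K n d)

theorem mem_part {J : Ideal (MvPolynomial (Fin n) K)} {d : ℕ} {v : Mon n d → K} :
    v ∈ part J d ↔ ofCf K n d v ∈ J := Iff.rfl

theorem IsHomogIdeal.cf_mem {J : Ideal (MvPolynomial (Fin n) K)} (hJ : IsHomogIdeal J)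
    {f : MvPolynomial (Fin n) K} (hf : f ∈ J) (d : ℕ) : cf K n d f ∈ part J d := by
  rw [mem_part, ofCf_cf]
  exact hJ f hf d

theorem part_mono {J J' : Ideal (MvPolynomial (Fin n) K)} (h : J ≤ J') (d : ℕ) :
    part J d ≤ part J' d := fun _ hv => h hv

theorem part_inf (J J' : Ideal (MvPolynomial (Fin n) K)) (d : ℕ) :
    part (J ⊓ J') d = part J d ⊓ part J' d := rfl

theorem IsHomogIdeal.le_of_part_le {J J' : Ideal (MvPolynomial (Fin n) K)} (hJ : IsHomogIdeal J)
    (h : ∀ d, part J d ≤ part J' d) : J ≤ J' := by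
  intro f hf
  rw [← sum_homogeneousComponent f]
  refine J'.sum_mem fun d _ => ?_
  rw [← ofCf_cf]
  exact h d (hJ.cf_mem hf d)

theorem wt_add (ω : Fin n → ℝ) (m m' : Fin n →₀ ℕ) : wt ω (m + m') = wt ω m + wt ω m' := by
  simp [wt, mul_add, Finset.sum_add_distrib]

/-- The forms obtained from some `f ∈ J` by keeping the terms of weight `a`, where `a` bounds the
weights of all terms of `f`: the initial forms of elements of `J`, together with `0`. In contrast
to `iniW` this passes to graded pieces without a case distinction. -/
def topForms (ω : Fin n → ℝ) (J : Ideal (MvPolynomial (Fin n) K)) :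
    Set (MvPolynomial (Fin n) K) :=
  {u | ∃ f ∈ J, ∃ a : ℝ, (∀ m, coeff m f ≠ 0 → wt ω m ≤ a) ∧
    ∀ m, (wt ω m = a → coeff m u = coeff m f) ∧ (wt ω m ≠ a → coeff m u = 0)}

theorem coeff_iniW (ω : Fin n → ℝ) (f : MvPolynomial (Fin n) K) (m : Fin n →₀ ℕ) :
    ((∀ m' ∈ f.support, wt ω m' ≤ wt ω m) → coeff m (iniW ω f) = coeff m f) ∧
    ((¬ ∀ m' ∈ f.support, wt ω m' ≤ wt ω m) → coeff m (iniW ω f) = 0) := by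
  classical
  rw [iniW, coeff_sum]
  simp only [coeff_monomial, Finset.sum_ite_eq', Finset.mem_filter, mem_support_iff]
  constructor
  · intro h
    by_cases hm : coeff m f = 0
    · simp [hm]
    · rw [if_pos ⟨hm, by simpa using h⟩]
  · intro h
    rw [if_neg fun h' => h (by simpa using h'.2)]

theorem iniW_mem_topForms (ω : Fin n → ℝ) {J : Ideal (MvPolynomial (Fin n) K)}
    {f : MvPolynomial (Fin n) K} (hf : f ∈ J) : iniW ω f ∈ topForms ω J := by
  classical
  by_cases h0 : f = 0
  · subst h0
    exact ⟨0, J.zero_mem, 0, by simp, by simp [iniW]⟩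
  obtain ⟨j, hj, hmax⟩ := Finset.exists_max_image f.support (wt ω) (support_nonempty.2 h0)
  refine ⟨f, hf, wt ω j, fun m hm => hmax m (mem_support_iff.2 hm), fun m => ⟨fun hm => ?_, ?_⟩⟩
  · exact (coeff_iniW ω f m).1 (hm ▸ hmax)
  · intro hm
    by_cases hmf : m ∈ f.support
    · exact (coeff_iniW ω f m).2 fun h => hm (le_antisymm (hmax m hmf) (h j hj))
    · rw [notMem_support_iff] at hmf
      by_cases h : ∀ m' ∈ f.support, wt ω m' ≤ wt ω m
      · rw [(coeff_iniW ω f m).1 h, hmf]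
      · exact (coeff_iniW ω f m).2 h

theorem topForms_subset (ω : Fin n → ℝ) (J : Ideal (MvPolynomial (Fin n) K)) :
    topForms ω J ⊆ iniIdealW ω J := by
  classical
  rintro u ⟨f, hf, a, ha, hu⟩
  by_cases hu0 : u = 0
  · rw [hu0]
    exact Ideal.zero_mem _
  obtain ⟨m, hm⟩ := ne_zero_iff.1 hu0
  have hma : wt ω m = a := by
    by_contra h
    exact hm ((hu m).2 h)
  refine Ideal.subset_span ⟨f, hf, ?_⟩
  have hmf : m ∈ f.support := by
    rw [mem_support_iff, ← (hu m).1 hma]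
    exact hm
  ext s
  by_cases hs : wt ω s = a
  · rw [(hu s).1 hs, (coeff_iniW ω f s).1]
    intro m' hm'
    rw [hs]
    exact ha m' (mem_support_iff.1 hm')
  · rw [(hu s).2 hs]
    by_cases h : ∀ m' ∈ f.support, wt ω m' ≤ wt ω s
    · rw [(coeff_iniW ω f s).1 h]
      by_contra h0
      exact hs (le_antisymm (ha s (Ne.symm h0)) (hma ▸ h m hmf))
    · rw [(coeff_iniW ω f s).2 h]

theorem monomial_mul_topForms (ω : Fin n → ℝ) {J : Ideal (MvPolynomial (Fin n) K)}
    (s : Fin n →₀ ℕ) (c : K) {u : MvPolynomial (Fin n) K} (hu : u ∈ topForms ω J) :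
    monomial s c * u ∈ topForms ω J := by
  classical
  obtain ⟨f, hf, a, ha, hu⟩ := hu
  refine ⟨monomial s c * f, J.mul_mem_left _ hf, wt ω s + a, fun m hm => ?_, fun m => ?_⟩
  · rw [coeff_monomial_mul'] at hm
    split_ifs at hm with h
    · have := ha _ (right_ne_zero_of_mul hm)
      rw [← add_tsub_cancel_of_le h, wt_add]
      linarith
    · exact absurd rfl hm
  · simp only [coeff_monomial_mul']
    split_ifs with h
    · have e : wt ω m = wt ω s + wt ω (m - s) := by
        rw [← wt_add, add_tsub_cancel_of_le h]
      constructor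
      · intro hm
        rw [(hu (m - s)).1 (by linarith)]
      · intro hm
        rw [(hu (m - s)).2 (fun h' => hm (by linarith)), mul_zero]
    · simp

/-- Initial forms span the initial ideal already as a `K`-vector space, since a monomial times an
initial form is again one. -/
theorem mem_iniIdealW_iff (ω : Fin n → ℝ) (J : Ideal (MvPolynomial (Fin n) K))
    (p : MvPolynomial (Fin n) K) :
    p ∈ iniIdealW ω J ↔ p ∈ Submodule.span K (topForms ω J) := by
  constructor
  · intro hp
    induction hp using Submodule.span_induction with
    | mem x hx =>
      obtain ⟨f, hf, rfl⟩ := hx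
      exact Submodule.subset_span (iniW_mem_topForms ω hf)
    | zero => exact Submodule.zero_mem _
    | add x y _ _ hx hy => exact Submodule.add_mem _ hx hy
    | smul q x _ hx =>
      rw [smul_eq_mul]
      induction q using induction_on' with
      | monomial s c =>
        clear * - hx
        induction hx using Submodule.span_induction with
        | mem x hx => exact Submodule.subset_span (monomial_mul_topForms ω s c hx)
        | zero => simp
        | add x y _ _ hx hy => rw [mul_add]; exact Submodule.add_mem _ hx hy
        | smul r x _ hx => rw [mul_smul_comm]; exact Submodule.smul_mem _ _ hx
      | add q r hq hr => rw [add_mul]; exact Submodule.add_mem _ hq hr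
  · intro hp
    have : Submodule.span K (topForms ω J) ≤ (iniIdealW ω J).restrictScalars K :=
      Submodule.span_le.2 (topForms_subset ω J)
    exact this hp

/-- The weight `ω` on the exponent vectors of degree `d`. -/
noncomputable def wtd (ω : Fin n → ℝ) (d : ℕ) (i : Mon n d) : ℝ := wt ω i.1

theorem cf_mem_inW {ω : Fin n → ℝ} {J : Ideal (MvPolynomial (Fin n) K)} (hJ : IsHomogIdeal J)
    {p : MvPolynomial (Fin n) K} (hp : p ∈ iniIdealW ω J) (d : ℕ) :
    cf K n d p ∈ inW (wtd ω d) (part J d) := by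
  classical
  rw [mem_iniIdealW_iff] at hp
  induction hp using Submodule.span_induction with
  | mem u hu =>
    obtain ⟨f, hf, a, ha, hu⟩ := hu
    refine Submodule.subset_span ⟨_, hJ.cf_mem hf d, a, fun i hi => ha i.1 hi, ?_⟩
    ext i
    rw [lvl_apply]
    split_ifs with h
    · exact (hu i.1).1 h
    · exact (hu i.1).2 h
  | zero => simp
  | add x y _ _ hx hy => rw [map_add]; exact Submodule.add_mem _ hx hy
  | smul r x _ hx => rw [map_smul]; exact Submodule.smul_mem _ _ hx

theorem inW_le_part (ω : Fin n → ℝ) (J : Ideal (MvPolynomial (Fin n) K)) (d : ℕ) :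
    inW (wtd ω d) (part J d) ≤ part (iniIdealW ω J) d := by
  classical
  refine Submodule.span_le.2 ?_
  rintro _ ⟨v, hv, a, ha, rfl⟩
  refine topForms_subset ω J ⟨ofCf K n d v, hv, a, fun m hm => ?_, fun m => ?_⟩
  · rw [coeff_ofCf] at hm
    split_ifs at hm with h
    · exact ha _ hm
    · exact absurd rfl hm
  · simp only [coeff_ofCf]
    split_ifs with h
    · rw [lvl_apply]
      exact ⟨fun e => if_pos e, fun e => if_neg e⟩
    · simp

theorem part_iniIdealW {J : Ideal (MvPolynomial (Fin n) K)} (hJ : IsHomogIdeal J)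
    (ω : Fin n → ℝ) (d : ℕ) : part (iniIdealW ω J) d = inW (wtd ω d) (part J d) := by
  refine le_antisymm (fun v hv => ?_) (inW_le_part ω J d)
  simpa using cf_mem_inW hJ hv d

theorem IsHomogIdeal.iniIdealW {J : Ideal (MvPolynomial (Fin n) K)} (hJ : IsHomogIdeal J)
    (ω : Fin n → ℝ) : IsHomogIdeal (iniIdealW ω J) := by
  intro f hf d
  rw [← ofCf_cf]
  exact inW_le_part ω J d (cf_mem_inW hJ hf d)

theorem IsHomogIdeal.inf {J J' : Ideal (MvPolynomial (Fin n) K)} (hJ : IsHomogIdeal J)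
    (hJ' : IsHomogIdeal J') : IsHomogIdeal (J ⊓ J') :=
  fun f hf d => ⟨hJ f hf.1 d, hJ' f hf.2 d⟩

/-- The Hilbert function of `J` (the dimension of `J_d`, not of the quotient). -/
noncomputable def hilb (J : Ideal (MvPolynomial (Fin n) K)) (d : ℕ) : ℕ :=
  Module.finrank K (part J d)

theorem hilb_iniIdealW {J : Ideal (MvPolynomial (Fin n) K)} (hJ : IsHomogIdeal J)
    (ω : Fin n → ℝ) (d : ℕ) : hilb (_root_.iniIdealW ω J) d = hilb J d := by
  rw [hilb, part_iniIdealW hJ, finrank_inW, hilb]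

/-- The exponents of the monomials in the initial ideal of `J` for the weight `τ`. -/
def inSet (τ : Fin n → ℝ) (J : Ideal (MvPolynomial (Fin n) K)) : Set (Fin n →₀ ℕ) :=
  {m | monomial m (1 : K) ∈ iniIdealW τ J}

theorem isUpperSet_inSet (τ : Fin n → ℝ) (J : Ideal (MvPolynomial (Fin n) K)) :
    IsUpperSet (inSet τ J) := by
  intro m m' h hm
  have : monomial m' (1 : K) = monomial (m' - m) 1 * monomial m 1 := by
    rw [monomial_mul, tsub_add_cancel_of_le h, one_mul]
  rw [inSet, Set.mem_ofPred_eq, this]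
  exact Ideal.mul_mem_left _ _ hm

theorem ofCf_single {d : ℕ} [DecidableEq (Mon n d)] (i : Mon n d) :
    ofCf K n d (Pi.single i 1) = monomial i.1 1 := by
  rw [ofCf_apply, Finset.sum_eq_single_of_mem i (Finset.mem_univ _)]
  · simp
  · intro b _ hb
    simp [hb]

theorem mem_inSet_iff {τ : Fin n → ℝ} {J : Ideal (MvPolynomial (Fin n) K)}
    (hJ : IsHomogIdeal J) {d : ℕ} [DecidableEq (Mon n d)] (i : Mon n d) :
    i.1 ∈ inSet τ J ↔ (Pi.single i 1 : Mon n d → K) ∈ inW (wtd τ d) (part J d) := by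
  rw [← part_iniIdealW hJ, mem_part, ofCf_single]
  rfl

/-- If `τ` separates monomials, the initial ideal for `τ` is a monomial ideal with the same Hilbert
function as `J`. -/
theorem ncard_inSet {τ : Fin n → ℝ} (hτ : Function.Injective (wt τ))
    {J : Ideal (MvPolynomial (Fin n) K)} (hJ : IsHomogIdeal J) (d : ℕ) :
    (inSet τ J ∩ {m | m.degree = d}).ncard = hilb J d := by
  classical
  rw [hilb, finrank_eq_ncard_of_injective (part J d) (w := wtd τ d)
    (fun i j h => Subtype.ext (hτ h)), ← Set.ncard_image_of_injective _ Subtype.val_injective]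
  congr 1
  ext m
  constructor
  · rintro ⟨h1, h2⟩
    exact ⟨⟨m, h2⟩, (mem_inSet_iff hJ _).1 h1, rfl⟩
  · rintro ⟨i, hi, rfl⟩
    exact ⟨(mem_inSet_iff hJ i).2 hi, i.2⟩

/-- Homogeneous ideals `J` with a given Hilbert function are determined by their pieces of degree at
most some `D`, among the homogeneous ideals which they contain. This follows from `exists_degree_bound`
applied to a monomial initial ideal of `J`. -/
theorem exists_bound (K : Type*) [Field K] (n : ℕ) (H : ℕ → ℕ) : ∃ D : ℕ,
    ∀ J J' : Ideal (MvPolynomial (Fin n) K), IsHomogIdeal J → IsHomogIdeal J' → J' ≤ J →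
      hilb J = H → (∀ d ≤ D, part J d ≤ part J' d) → J ≤ J' := by
  classical
  obtain ⟨D, hD⟩ := exists_degree_bound (n := n) H
  obtain ⟨τ, hτ⟩ := exists_injective_wt n
  refine ⟨D, fun J J' hJ hJ' hle hH h => hJ.le_of_part_le fun d => ?_⟩
  have hsub : inSet τ J ⊆ inSet τ J' := by
    intro m hm
    obtain ⟨c, hc, hcm, hcD⟩ := hD (inSet τ J) (isUpperSet_inSet τ J)
      (fun d => by rw [ncard_inSet hτ hJ, hH]) m hm
    refine isUpperSet_inSet τ J' hcm ?_
    exact (mem_inSet_iff hJ' ⟨c, rfl⟩).2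
      (inW_mono _ (h _ hcD) ((mem_inSet_iff hJ ⟨c, rfl⟩).1 hc))
  have hdim : hilb J d ≤ hilb J' d := by
    rw [← ncard_inSet hτ hJ, ← ncard_inSet hτ hJ']
    refine Set.ncard_le_ncard (Set.inter_subset_inter_left _ hsub) ?_
    exact ((Finsupp.finite_of_degree_le d).subset fun m hm => le_of_eq hm).inter_of_right _
  exact (Submodule.eq_of_le_of_finrank_le (part_mono hle d) hdim).ge

/-- Equality of initial ideals can be tested in degrees up to `D`: both have the same Hilbert
function as `J`, so the degree bound applies to their inclusion into each other, via the
intersection. -/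
theorem iniIdealW_eq_iff {H : ℕ → ℕ} {D : ℕ}
    (hD : ∀ J J' : Ideal (MvPolynomial (Fin n) K), IsHomogIdeal J → IsHomogIdeal J' → J' ≤ J →
      hilb J = H → (∀ d ≤ D, part J d ≤ part J' d) → J ≤ J')
    {J : Ideal (MvPolynomial (Fin n) K)} (hJ : IsHomogIdeal J) (hH : hilb J = H)
    (ω ω' : Fin n → ℝ) :
    iniIdealW ω J = iniIdealW ω' J ↔
      ∀ d ≤ D, inW (wtd ω d) (part J d) = inW (wtd ω' d) (part J d) := by
  constructor
  · intro h d _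
    rw [← part_iniIdealW hJ, h, part_iniIdealW hJ]
  · intro h
    have key : ∀ ω₁ ω₂ : Fin n → ℝ,
        (∀ d ≤ D, inW (wtd ω₁ d) (part J d) = inW (wtd ω₂ d) (part J d)) →
        iniIdealW ω₁ J ≤ iniIdealW ω₂ J := by
      intro ω₁ ω₂ h
      refine le_trans (hD _ (iniIdealW ω₁ J ⊓ iniIdealW ω₂ J) (hJ.iniIdealW _)
        ((hJ.iniIdealW _).inf (hJ.iniIdealW _)) inf_le_left ?_ fun d hd => ?_) inf_le_right
      · funext d
        rw [hilb_iniIdealW hJ, hH]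
      · rw [part_inf]
        refine le_inf le_rfl ?_
        rw [part_iniIdealW hJ, part_iniIdealW hJ, h d hd]
    exact le_antisymm (key _ _ h) (key _ _ fun d hd => (h d hd).symm)

end Graded

/-! ### The action of `GL_n` and the generic matroid -/

section Generic

variable {K : Type*} [Field K] {n : ℕ}

theorem cc_comp (g h : Matrix (Fin n) (Fin n) K) : (cc g).comp (cc h) = cc (h * g) := by
  refine algHom_ext fun i => ?_
  simp only [cc, AlgHom.comp_apply, aeval_X, map_sum, map_mul, algHom_C, algebraMap_eq,
    Finset.mul_sum, Matrix.mul_apply, Finset.sum_mul]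
  rw [Finset.sum_comm]
  simp [mul_assoc]

theorem cc_one : cc (1 : Matrix (Fin n) (Fin n) K) = AlgHom.id K _ := by
  refine algHom_ext fun i => ?_
  simp [cc, Matrix.one_apply]

theorem cc_bijective {g : Matrix (Fin n) (Fin n) K} (hg : g.det ≠ 0) :
    Function.Bijective (cc g) := by
  have hu : IsUnit g.det := isUnit_iff_ne_zero.2 hg
  have h1 : (cc g).comp (cc g⁻¹) = AlgHom.id K _ := by
    rw [cc_comp, Matrix.nonsing_inv_mul _ hu, cc_one]
  have h2 : (cc g⁻¹).comp (cc g) = AlgHom.id K _ := by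
    rw [cc_comp, Matrix.mul_nonsing_inv _ hu, cc_one]
  exact Function.bijective_iff_has_inverse.2
    ⟨cc g⁻¹, fun x => AlgHom.congr_fun h2 x, fun x => AlgHom.congr_fun h1 x⟩

theorem cc_isHomogeneous (g : Matrix (Fin n) (Fin n) K) {f : MvPolynomial (Fin n) K} {d : ℕ}
    (hf : f.IsHomogeneous d) : (cc g f).IsHomogeneous d := by
  have := hf.aeval (fun i => ∑ j, C (g i j) * X j) (n := 1) fun i =>
    IsHomogeneous.sum _ _ _ fun j _ => isHomogeneous_C_mul_X _ _
  simpa [cc] using this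

theorem homogeneousComponent_cc (g : Matrix (Fin n) (Fin n) K) (f : MvPolynomial (Fin n) K)
    (d : ℕ) : homogeneousComponent d (cc g f) = cc g (homogeneousComponent d f) := by
  conv_lhs => rw [← sum_homogeneousComponent f]
  rw [map_sum, map_sum]
  by_cases hd : d ∈ Finset.range (f.totalDegree + 1)
  · rw [Finset.sum_eq_single_of_mem d hd]
    · exact homogeneousComponent_of_mem (cc_isHomogeneous g
        (homogeneousComponent_isHomogeneous d f)) |>.trans (if_pos rfl)
    · intro e _ he
      exact homogeneousComponent_of_mem (cc_isHomogeneous g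
        (homogeneousComponent_isHomogeneous e f)) |>.trans (if_neg he.symm)
  · rw [homogeneousComponent_eq_zero d f (by simpa using hd), map_zero]
    refine Finset.sum_eq_zero fun e he => ?_
    exact homogeneousComponent_of_mem (cc_isHomogeneous g
        (homogeneousComponent_isHomogeneous e f)) |>.trans (if_neg (by rintro rfl; exact hd he))

theorem mem_map_cc {g : Matrix (Fin n) (Fin n) K} (hg : g.det ≠ 0)
    (I : Ideal (MvPolynomial (Fin n) K)) {f : MvPolynomial (Fin n) K} :
    f ∈ Ideal.map (cc g) I ↔ ∃ x ∈ I, cc g x = f :=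
  Ideal.mem_map_iff_of_surjective (cc g) (cc_bijective hg).2

theorem IsHomogIdeal.map_cc {I : Ideal (MvPolynomial (Fin n) K)} (hI : IsHomogIdeal I)
    {g : Matrix (Fin n) (Fin n) K} (hg : g.det ≠ 0) : IsHomogIdeal (Ideal.map (cc g) I) := by
  intro f hf d
  obtain ⟨x, hx, rfl⟩ := (mem_map_cc hg I).1 hf
  rw [homogeneousComponent_cc]
  exact (mem_map_cc hg I).2 ⟨_, hI x hx d, rfl⟩

/-- The action of `cc g` on coefficient vectors of forms of degree `d`. -/
noncomputable def actD (g : Matrix (Fin n) (Fin n) K) (d : ℕ) :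
    (Mon n d → K) →ₗ[K] (Mon n d → K) :=
  (cf K n d).comp ((cc g).toLinearMap.comp (ofCf K n d))

theorem ofCf_actD (g : Matrix (Fin n) (Fin n) K) (d : ℕ) (v : Mon n d → K) :
    ofCf K n d (actD g d v) = cc g (ofCf K n d v) := by
  simp only [actD, LinearMap.comp_apply, AlgHom.toLinearMap_apply]
  rw [ofCf_cf, homogeneousComponent_cc, ← ofCf_cf, cf_ofCf]

theorem ofCf_injective (d : ℕ) : Function.Injective (ofCf K n d) :=
  Function.LeftInverse.injective (cf_ofCf d)

theorem actD_injective {g : Matrix (Fin n) (Fin n) K} (hg : g.det ≠ 0) (d : ℕ) :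
    Function.Injective (actD g d) := by
  intro v w h
  apply ofCf_injective d
  apply (cc_bijective hg).1
  rw [← ofCf_actD, h, ofCf_actD]

theorem part_map_cc {I : Ideal (MvPolynomial (Fin n) K)} (hI : IsHomogIdeal I)
    {g : Matrix (Fin n) (Fin n) K} (hg : g.det ≠ 0) (d : ℕ) :
    part (Ideal.map (cc g) I) d = (part I d).map (actD g d) := by
  ext v
  rw [mem_part, Submodule.mem_map]
  constructor
  · intro h
    obtain ⟨x, hx, hxv⟩ := (mem_map_cc hg I).1 h
    refine ⟨cf K n d x, hI.cf_mem hx d, ofCf_injective d ?_⟩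
    rw [ofCf_actD, ofCf_cf, ← homogeneousComponent_cc, hxv, ← ofCf_cf, cf_ofCf]
  · rintro ⟨u, hu, rfl⟩
    rw [ofCf_actD]
    exact Ideal.mem_map_of_mem _ hu

theorem hilb_map_cc {I : Ideal (MvPolynomial (Fin n) K)} (hI : IsHomogIdeal I)
    {g : Matrix (Fin n) (Fin n) K} (hg : g.det ≠ 0) : hilb (Ideal.map (cc g) I) = hilb I := by
  funext d
  rw [hilb, part_map_cc hI hg, hilb]
  exact (Submodule.equivMapOfInjective _ (actD_injective hg d) _).finrank_eq.symm

/-- The generic change of coordinates, whose matrix consists of the indeterminates `y_{ij}`;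
its coefficients specialize to those of `cc g` (`evalMat_coeff_ccGen`). -/
noncomputable def ccGen (K : Type*) [Field K] (n : ℕ) : MvPolynomial (Fin n) K →ₐ[K]
    MvPolynomial (Fin n) (MvPolynomial (Fin n × Fin n) K) :=
  aeval (fun i => ∑ j, C (X (i, j)) * X j)

theorem evalMat_coeff_ccGen (g : Matrix (Fin n) (Fin n) K) (f : MvPolynomial (Fin n) K)
    (m : Fin n →₀ ℕ) : evalMat (coeff m (ccGen K n f)) g = coeff m (cc g f) := by
  have : ((mapAlgHom (aeval fun ij : Fin n × Fin n => g ij.1 ij.2)).comp (ccGen K n) :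
      MvPolynomial (Fin n) K →ₐ[K] MvPolynomial (Fin n) K) = cc g := by
    refine algHom_ext fun i => ?_
    simp [ccGen, cc]
  rw [← this]
  simp [evalMat, mapAlgHom_apply, coeff_map]

/-- In each degree, being a basis of the matroid of `gI` is an open condition on `g`. When `B` has
the right size it is the non-vanishing of the maximal minor, with rows indexed by `B`, of the
matrix whose columns are the images under `g` of a basis of `I_d`. Otherwise it never holds, and
`p = 0` works. -/
theorem exists_minor (I : Ideal (MvPolynomial (Fin n) K)) (hI : IsHomogIdeal I) (d : ℕ)
    (B : Finset (Mon n d)) : ∃ p : MvPolynomial (Fin n × Fin n) K,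
      ∀ g : Matrix (Fin n) (Fin n) K, g.det ≠ 0 →
        (IsMBasis (part (Ideal.map (cc g) I) d) B ↔ evalMat p g ≠ 0) := by
  classical
  by_cases hB : B.card = hilb I d
  swap
  · refine ⟨0, fun g hg => ?_⟩
    simp only [evalMat, map_zero, ne_eq, not_true_eq_false, iff_false]
    intro h
    rw [← hilb_map_cc hI hg] at hB
    exact hB h.1
  let bI : Module.Basis B K (part I d) :=
    (Module.finBasisOfFinrankEq K (part I d) hB.symm).reindex B.equivFin.symm
  let P : Matrix B B (MvPolynomial (Fin n × Fin n) K) :=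
    fun c i => coeff c.1.1 (ccGen K n (ofCf K n d (bI i)))
  refine ⟨P.det, fun g hg => ?_⟩
  let M : Matrix B B K := fun c i => actD g d (bI i) c
  have hPM : evalMat P.det g = M.det := by
    rw [evalMat, RingHom.map_det]
    congr 1
    ext c i
    exact evalMat_coeff_ccGen g _ _
  have hM : ∀ x : B → K, ∀ c : B, (M.mulVec x) c = actD g d ((∑ i, x i • bI i : part I d)) c := by
    intro x c
    simp [Matrix.mulVec, dotProduct, M, mul_comm]
  rw [hPM, ← isUnit_iff_ne_zero, ← Matrix.isUnit_iff_isUnit_det,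
    ← Matrix.mulVec_injective_iff_isUnit]
  constructor
  · intro h
    rw [← Matrix.coe_mulVecLin, ← LinearMap.ker_eq_bot, LinearMap.ker_eq_bot']
    intro x hx
    have h0 : actD g d ((∑ i, x i • bI i : part I d)) = 0 := by
      refine h.2 _ ?_ fun c hc => ?_
      · rw [part_map_cc hI hg]
        exact Submodule.mem_map_of_mem (Subtype.prop _)
      · rw [← hM x ⟨c, hc⟩]
        exact congrFun hx _
    have h1 : (∑ i, x i • bI i : part I d) = 0 :=
      Subtype.ext (actD_injective hg d (h0.trans (map_zero _).symm))
    funext i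
    exact Fintype.linearIndependent_iff.1 bI.linearIndependent x h1 i
  · intro h
    refine ⟨hB.trans (congrFun (hilb_map_cc hI hg) d).symm, fun v hv hv0 => ?_⟩
    rw [part_map_cc hI hg] at hv
    obtain ⟨u, hu, rfl⟩ := hv
    have hx : M.mulVec (bI.repr ⟨u, hu⟩) = 0 := by
      funext c
      rw [hM, bI.sum_repr]
      exact hv0 c c.2
    have := h (hx.trans (Matrix.mulVec_zero M).symm)
    have h2 : (⟨u, hu⟩ : part I d) = 0 := by
      apply bI.repr.injective
      ext i
      simpa using congrFun this i
    have : u = 0 := congrArg Subtype.val h2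
    rw [this, map_zero]

theorem evalMat_prod {α : Type*} (s : Finset α) (f : α → MvPolynomial (Fin n × Fin n) K)
    (g : Matrix (Fin n) (Fin n) K) : evalMat (∏ a ∈ s, f a) g = ∏ a ∈ s, evalMat (f a) g := by
  simp [evalMat, map_prod]

/-- A nonzero polynomial does not vanish identically on `GL_n(K)`, since over an infinite field
its product with the determinant takes a nonzero value. -/
theorem exists_evalMat_ne_zero [Infinite K] {p : MvPolynomial (Fin n × Fin n) K} (hp : p ≠ 0) :
    ∃ g : Matrix (Fin n) (Fin n) K, g.det ≠ 0 ∧ evalMat p g ≠ 0 := by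
  let Y := Matrix.mvPolynomialX (Fin n) (Fin n) K
  have hY : Y.det ≠ 0 := Matrix.det_mvPolynomialX_ne_zero _ _
  have : ∃ x, eval x (Y.det * p) ≠ 0 := by
    by_contra! h
    exact mul_ne_zero hY hp (MvPolynomial.funext fun x => by rw [h x, map_zero])
  obtain ⟨x, hx⟩ := this
  rw [map_mul] at hx
  refine ⟨Matrix.of fun i j => x (i, j), fun h => left_ne_zero_of_mul hx ?_,
    right_ne_zero_of_mul hx⟩
  rw [RingHom.map_det, ← h]
  congr 1
  ext i j
  simp [Y]

/-- For generic `g` the matroid of `(gI)_d` does not depend on `g`: its bases are the sets whose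
minor is not the zero polynomial, and `p` is the product of these finitely many minors. -/
theorem exists_generic_matroid (I : Ideal (MvPolynomial (Fin n) K)) (hI : IsHomogIdeal I)
    (d : ℕ) : ∃ p : MvPolynomial (Fin n × Fin n) K, p ≠ 0 ∧ ∃ S : Set (Finset (Mon n d)),
      ∀ g : Matrix (Fin n) (Fin n) K, g.det ≠ 0 → evalMat p g ≠ 0 →
        ∀ B, IsMBasis (part (Ideal.map (cc g) I) d) B ↔ B ∈ S := by
  classical
  choose q hq using exists_minor I hI d
  refine ⟨∏ B : {B // q B ≠ 0}, q B.1, Finset.prod_ne_zero_iff.2 fun B _ => B.2, {B | q B ≠ 0},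
    fun g hg hp B => ?_⟩
  rw [hq B g hg]
  rw [evalMat_prod, Finset.prod_ne_zero_iff] at hp
  constructor
  · intro h h0
    exact h (by rw [h0]; simp [evalMat])
  · intro h
    exact hp ⟨B, h⟩ (Finset.mem_univ _)

end Generic

/-- (Generic Gröbner fan.)  Over an infinite field there is a nonempty
Zariski open subset `U ⊆ GL_n(K)` such that the Gröbner fan of `gI` is the same for all
`g ∈ U`: for `g, h ∈ U` and all weights `ω, ω'`,
`in_ω(gI) = in_{ω'}(gI)` iff `in_ω(hI) = in_{ω'}(hI)`. -/
theorem exists_open_groebnerFan_constant {K : Type*} [Field K] [Infinite K] {n : ℕ}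
    (I : Ideal (MvPolynomial (Fin n) K)) (hI : IsHomogIdeal I) :
    ∃ p : MvPolynomial (Fin n × Fin n) K,
      (∃ g : Matrix (Fin n) (Fin n) K, g.det ≠ 0 ∧ evalMat p g ≠ 0) ∧
      ∀ g h : Matrix (Fin n) (Fin n) K,
        g.det ≠ 0 → evalMat p g ≠ 0 → h.det ≠ 0 → evalMat p h ≠ 0 →
        ∀ ω ω' : Fin n → ℝ,
          (iniIdealW ω (Ideal.map (cc g) I) = iniIdealW ω' (Ideal.map (cc g) I) ↔
           iniIdealW ω (Ideal.map (cc h) I) = iniIdealW ω' (Ideal.map (cc h) I)) := by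
  obtain ⟨D, hD⟩ := exists_bound K n (hilb I)
  choose q hq S hS using exists_generic_matroid I hI
  refine ⟨∏ d ∈ Finset.range (D + 1), q d,
    exists_evalMat_ne_zero (Finset.prod_ne_zero_iff.2 fun d _ => hq d), ?_⟩
  intro g h hg hpg hh hph ω ω'
  rw [evalMat_prod, Finset.prod_ne_zero_iff] at hpg hph
  rw [iniIdealW_eq_iff hD (hI.map_cc hg) (hilb_map_cc hI hg),
    iniIdealW_eq_iff hD (hI.map_cc hh) (hilb_map_cc hI hh)]
  refine forall₂_congr fun d hd => ?_
  have hd' : d ∈ Finset.range (D + 1) := Finset.mem_range.2 (Nat.lt_succ_of_le hd)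
  rw [inW_eq_inW_iff, inW_eq_inW_iff]
  simp only [hS d g hg (hpg d hd'), hS d h hh (hph d hd')]
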